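/- There is no invertible element F ∈ Q⊗Q with (ε⊗id)(F) = 1 = (id⊗ε)(F) such that F·Δ(a)·F^{-1} = Δ(a) for all a ∈ Q and Φ = (F⊗1)·(Δ⊗id)(F)·((id⊗Δ)(F))^{-1}·(1⊗F)^{-1}. That is, the coassociator Φ is not the coboundary of any Drinfeld twist of the Hopf algebra Q: the quasi-Hopf algebra (Q, Φ) cannot be obtained as a Drinfeld twist of Q, so Φ defines a nontrivial class in the third Hopf-algebra cohomology of Q. -/

import Mathlib

open TensorProduct

set_option maxHeartbeats 1000000
set_option synthInstance.maxHeartbeats 400000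

noncomputable section

/-- Generators of the restricted quantum group `Q = \bar U_i sl(2)`. -/
inductive QGen : Type
  | E | F | K | Kinv
deriving DecidableEq

/-- The free algebra on the generators. -/
abbrev FA : Type := FreeAlgebra ℂ QGen

def ιE : FA := FreeAlgebra.ι ℂ QGen.E
def ιF : FA := FreeAlgebra.ι ℂ QGen.F
def ιK : FA := FreeAlgebra.ι ℂ QGen.K
def ιKi : FA := FreeAlgebra.ι ℂ QGen.Kinv

/-- Defining relations of `\bar U_i sl(2)` (at `q = i`, i.e. `p = 2`). -/
inductive QRel : FA → FA → Prop
  | KKi : QRel (ιK * ιKi) 1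
  | KiK : QRel (ιKi * ιK) 1
  | KEKi : QRel (ιK * ιE * ιKi) (-ιE)
  | KFKi : QRel (ιK * ιF * ιKi) (-ιF)
  | EF : QRel (ιE * ιF - ιF * ιE) ((2 * Complex.I)⁻¹ • (ιK - ιKi))
  | Esq : QRel (ιE ^ 2) 0
  | Fsq : QRel (ιF ^ 2) 0
  | K4 : QRel (ιK ^ 4) 1

/-- The restricted quantum group `\bar U_i sl(2)`: the quotient of the free algebra
by the two-sided ideal generated by the defining relations. -/
abbrev Q : Type := RingQuot QRel

def gE : Q := RingQuot.mkAlgHom ℂ QRel ιE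
def gF : Q := RingQuot.mkAlgHom ℂ QRel ιF
def gK : Q := RingQuot.mkAlgHom ℂ QRel ιK
def gKi : Q := RingQuot.mkAlgHom ℂ QRel ιKi

section Gadgets

variable (k : Type) [Field k] (A : Type) [Ring A] [Algebra k A]

abbrev TP2 : Type := A ⊗[k] A
abbrev TP3 : Type := A ⊗[k] (A ⊗[k] A)
abbrev TP4 : Type := A ⊗[k] (A ⊗[k] (A ⊗[k] A))

/-- Multiplication `a ⊗ b ↦ a * b`. -/
def mulA : TP2 k A →ₗ[k] A := LinearMap.mul' k A

/-- Tensor flip `a ⊗ b ↦ b ⊗ a`. -/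
def flipA : TP2 k A →ₗ[k] TP2 k A := (TensorProduct.comm k A A).toLinearMap

/-- `a ↦ a ⊗ 1`. -/
def lTen : A →ₗ[k] TP2 k A := (TensorProduct.mk k A A).flip 1

/-- `a ↦ 1 ⊗ a`. -/
def rTen : A →ₗ[k] TP2 k A := TensorProduct.mk k A A 1

/-- `a ⊗ b ↦ a ⊗ b ⊗ 1`. -/
def emb12 : TP2 k A →ₗ[k] TP3 k A := TensorProduct.map LinearMap.id (lTen k A)

/-- `a ⊗ b ↦ a ⊗ 1 ⊗ b`. -/
def emb13 : TP2 k A →ₗ[k] TP3 k A := TensorProduct.map LinearMap.id (rTen k A)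

/-- `a ⊗ b ↦ 1 ⊗ a ⊗ b`. -/
def emb23 : TP2 k A →ₗ[k] TP3 k A := TensorProduct.mk k A (TP2 k A) 1

/-- `a ⊗ b ⊗ c ↦ a ⊗ c ⊗ b`. -/
def perm132 : TP3 k A →ₗ[k] TP3 k A := TensorProduct.map LinearMap.id (flipA k A)

/-- `a ⊗ b ⊗ c ↦ b ⊗ c ⊗ a`. -/
def perm231 : TP3 k A →ₗ[k] TP3 k A :=
  (TensorProduct.assoc k A A A).toLinearMap ∘ₗ (TensorProduct.comm k A (TP2 k A)).toLinearMap

/-- `a ⊗ b ⊗ c ↦ c ⊗ a ⊗ b`. -/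
def perm312 : TP3 k A →ₗ[k] TP3 k A :=
  (TensorProduct.comm k (TP2 k A) A).toLinearMap ∘ₗ (TensorProduct.assoc k A A A).symm.toLinearMap

/-- `a ⊗ b ⊗ c ↦ b ⊗ a ⊗ c`. -/
def perm213 : TP3 k A →ₗ[k] TP3 k A :=
  (TensorProduct.assoc k A A A).toLinearMap ∘ₗ
    (TensorProduct.map (flipA k A) LinearMap.id) ∘ₗ (TensorProduct.assoc k A A A).symm.toLinearMap

variable {k A}

/-- `(Δ ⊗ id)` on two tensor factors, landing in the triple tensor product. -/
def copL (D : A →ₐ[k] TP2 k A) : TP2 k A →ₗ[k] TP3 k A :=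
  (TensorProduct.assoc k A A A).toLinearMap ∘ₗ TensorProduct.map D.toLinearMap LinearMap.id

/-- `(id ⊗ Δ)` on two tensor factors. -/
def copR (D : A →ₐ[k] TP2 k A) : TP2 k A →ₗ[k] TP3 k A :=
  TensorProduct.map LinearMap.id D.toLinearMap

/-- `(ε ⊗ id) : A ⊗ A → A`. -/
def cuL (ce : A →ₐ[k] k) : TP2 k A →ₗ[k] A :=
  (TensorProduct.lid k A).toLinearMap ∘ₗ TensorProduct.map ce.toLinearMap LinearMap.id

/-- `(id ⊗ ε) : A ⊗ A → A`. -/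
def cuR (ce : A →ₐ[k] k) : TP2 k A →ₗ[k] A :=
  (TensorProduct.rid k A).toLinearMap ∘ₗ TensorProduct.map LinearMap.id ce.toLinearMap

/-- `(id ⊗ ε ⊗ id) : A ⊗ A ⊗ A → A ⊗ A`. -/
def cuMid (ce : A →ₐ[k] k) : TP3 k A →ₗ[k] TP2 k A :=
  TensorProduct.map LinearMap.id (cuL ce)

/-- `(Δ ⊗ id ⊗ id)`. -/
def cop4_1 (D : A →ₐ[k] TP2 k A) : TP3 k A →ₗ[k] TP4 k A :=
  (TensorProduct.assoc k A A (TP2 k A)).toLinearMap ∘ₗ TensorProduct.map D.toLinearMap LinearMap.id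

/-- `(id ⊗ Δ ⊗ id)`. -/
def cop4_2 (D : A →ₐ[k] TP2 k A) : TP3 k A →ₗ[k] TP4 k A :=
  TensorProduct.map LinearMap.id (copL D)

/-- `(id ⊗ id ⊗ Δ)`. -/
def cop4_3 (D : A →ₐ[k] TP2 k A) : TP3 k A →ₗ[k] TP4 k A :=
  TensorProduct.map LinearMap.id (copR D)

/-- `a ⊗ b ⊗ c ↦ a ⊗ b ⊗ c ⊗ 1`, i.e. `Φ ↦ Φ ⊗ 1`. -/
def pad4 : TP3 k A →ₗ[k] TP4 k A :=
  TensorProduct.map LinearMap.id (TensorProduct.map LinearMap.id (lTen k A))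

/-- `a ⊗ b ⊗ c ↦ f(a) * g(b) * h(c)`. -/
def tmap3 (f g h : A →ₗ[k] A) : TP3 k A →ₗ[k] A :=
  mulA k A ∘ₗ TensorProduct.map f (mulA k A ∘ₗ TensorProduct.map g h)

/-- `a ⊗ b ↦ S(a) * b`, used in the antipode axiom `m ∘ (S ⊗ id) ∘ Δ = 1·ε`. -/
def antipL (s : A →ₗ[k] A) : TP2 k A →ₗ[k] A := mulA k A ∘ₗ TensorProduct.map s LinearMap.id

/-- `a ⊗ b ↦ a * S(b)`. -/
def antipR (s : A →ₗ[k] A) : TP2 k A →ₗ[k] A := mulA k A ∘ₗ TensorProduct.map LinearMap.id s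

end Gadgets

/-- Central idempotent `e₀ = (1 + K²)/2`. -/
def e0 : Q := (2:ℂ)⁻¹ • (1 + gK ^ 2)

/-- Central idempotent `e₁ = (1 − K²)/2`. -/
def e1 : Q := (2:ℂ)⁻¹ • (1 - gK ^ 2)

/-- `f⁺ = −i F`. -/
def fp : Q := (-Complex.I) • gF

/-- `f⁻ = E K⁻¹`. -/
def fm : Q := gE * gKi

/-- The Casimir element `C = FE − (i/4)(K − K⁻¹)`. -/
def Cas : Q := gF * gE - (Complex.I / 4) • (gK - gKi)

def t2 (a b : Q) : TP2 ℂ Q := a ⊗ₜ[ℂ] b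

def t3 (a b c : Q) : TP3 ℂ Q := a ⊗ₜ[ℂ] (b ⊗ₜ[ℂ] c)

def eEF : Q := gE * gF
def eEK : Q := gE * gK
def eFK : Q := gF * gK
def eEFK : Q := gE * gF * gK

/-- `Φ^{010}` component of the coassociator. -/
def Phi010 : TP3 ℂ Q :=
  t3 1 1 1 - (1 + Complex.I) • t3 gE gK gF + (1 - Complex.I) • t3 eFK gK eEK
    + (2:ℂ) • t3 eEFK 1 eEFK

/-- `Φ^{101}` component of the coassociator. -/
def Phi101 : TP3 ℂ Q :=
  (Complex.I - 1) • t3 1 gF eEK + t3 1 gK 1 + (2:ℂ) • t3 1 eEF eEFK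
    - (1 + Complex.I) • t3 1 eEK gF - (1 + Complex.I) • t3 gE eFK 1
    + (2 * Complex.I) • t3 gE eEFK gF + (1 - Complex.I) • t3 eFK gE 1
    - (2 * Complex.I) • t3 eFK eEFK eEK - (2:ℂ) • t3 eEFK eEF 1

/-- `Φ^{111}` component of the coassociator. -/
def Phi111 (β : ℂ) : TP3 ℂ Q :=
  (Complex.I * β ^ 2) • (
    (1 + Complex.I) • t3 1 gF eEK - t3 1 gK 1 - (2:ℂ) • t3 1 eEF 1
      - (2 * Complex.I) • t3 1 eEF eEFK + (1 + Complex.I) • t3 1 eEK gF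
      - (1 + Complex.I) • t3 gE 1 gF + (1 + Complex.I) • t3 gE eFK 1
      + (2 * Complex.I) • t3 gE eFK eEFK + (2:ℂ) • t3 gE eEFK gF
      - (1 + Complex.I) • t3 eFK 1 eEK + (1 + Complex.I) • t3 eFK gE 1
      + (2 * Complex.I) • t3 eFK gE eEFK + (2:ℂ) • t3 eFK eEFK eEK
      + (2 * Complex.I) • t3 eEFK gF eEK + (2 * Complex.I) • t3 eEFK gK eEFK
      - (2 * Complex.I) • t3 eEFK eEF 1 + (2 * Complex.I) • t3 eEFK eEK gF
      + (4:ℂ) • t3 eEFK eEF eEFK)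

/-- The coassociator `Φ` of the quasi-Hopf algebra structure on `Q`. -/
def Phi (β : ℂ) : TP3 ℂ Q :=
  t3 e0 e0 e0 + t3 e1 e0 e0 + Phi010 * t3 e0 e1 e0 + t3 e0 e0 e1
    + t3 e1 e1 e0 + Phi101 * t3 e1 e0 e1 + t3 e0 e1 e1 + Phi111 β * t3 e1 e1 e1

def R00 : TP2 ℂ Q :=
  (2:ℂ)⁻¹ • ((t2 1 1 + t2 1 gK + t2 gK 1 - t2 gK gK) * (t2 1 1 + (2 * Complex.I) • t2 gE gF))

def R01 : TP2 ℂ Q :=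
  (2:ℂ)⁻¹ • ((t2 1 1 - Complex.I • t2 1 gK + t2 gK 1 + Complex.I • t2 gK gK) *
    (t2 1 1 + (1 - Complex.I) • t2 eFK eEK - (1 - Complex.I) • t2 gE gF
      + (1 + Complex.I) • t2 eEFK 1 + (2 * Complex.I) • t2 eEFK eEFK))

def R10 : TP2 ℂ Q :=
  (2:ℂ)⁻¹ • ((t2 1 1 + t2 1 gK - Complex.I • t2 gK 1 + Complex.I • t2 gK gK) *
    (t2 1 gK + (1 - Complex.I) • t2 eFK gE + (1 - Complex.I) • t2 gE eFK
      - (1 - Complex.I) • t2 1 eEF - (2 * Complex.I) • t2 eEFK eEF))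

def R11 (β : ℂ) : TP2 ℂ Q :=
  (β / 2) • ((t2 1 1 - Complex.I • t2 1 gK - Complex.I • t2 gK 1 + t2 gK gK) *
    ((-Complex.I) • t2 gK 1 + (2 * Complex.I) • t2 eEK gF + (1 - Complex.I) • t2 gK eEFK
      - (1 + Complex.I) • t2 eEF 1 - (2 * Complex.I) • t2 eEF eEFK))

/-- The universal R-matrix `R` of the quasi-triangular quasi-Hopf structure on `Q`. -/
def Rmat (β : ℂ) : TP2 ℂ Q :=
  R00 * t2 e0 e0 + R01 * t2 e0 e1 + R10 * t2 e1 e0 + R11 β * t2 e1 e1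

/-- The standard R-matrix `R_st` of the quotient `Q/(K²-1)`. -/
def Rst : TP2 ℂ Q :=
  (2:ℂ)⁻¹ • ∑ m ∈ Finset.range 2, ∑ n ∈ Finset.range 2,
    ((-1:ℂ) ^ (m * n)) • (t2 (gK ^ m) (gK ^ n) * (t2 1 1 + (2 * Complex.I) • t2 gE gF))

/-- The monodromy matrix `M = R₂₁ · R`. -/
def Mmat (β : ℂ) : TP2 ℂ Q := flipA ℂ Q (Rmat β) * Rmat β

/-- The ribbon element `v = (e₀ − iβ K e₁)(1 − 2 f⁺ f⁻)`. -/
def vRib (β : ℂ) : Q := (e0 - (Complex.I * β) • (gK * e1)) * (1 - (2:ℂ) • (fp * fm))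

/-- The coevaluation element `β = e₀ − 2iβ² C e₁`. -/
def bbEl (β : ℂ) : Q := e0 - (2 * Complex.I * β ^ 2) • (Cas * e1)

/-- `b ⊗ c ↦ S(b · bb · S(c))`, inner part of the Drinfeld element. -/
def uInner (S : Q →ₗ[ℂ] Q) (bb : Q) : TP2 ℂ Q →ₗ[ℂ] Q :=
  S ∘ₗ mulA ℂ Q ∘ₗ TensorProduct.map (LinearMap.mulRight ℂ bb) S

/-- `Φ' ⊗ Φ'' ⊗ Φ''' ↦ S(Φ'' · bb · S(Φ''')) ⊗ Φ'`. -/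
def uMap1 (S : Q →ₗ[ℂ] Q) (bb : Q) : TP3 ℂ Q →ₗ[ℂ] TP2 ℂ Q :=
  TensorProduct.map (uInner S bb) LinearMap.id ∘ₗ (TensorProduct.comm ℂ Q (TP2 ℂ Q)).toLinearMap

/-- `R' ⊗ R'' ↦ S(R'') · al · R'`. -/
def uMap2 (S : Q →ₗ[ℂ] Q) (al : Q) : TP2 ℂ Q →ₗ[ℂ] Q :=
  mulA ℂ Q ∘ₗ TensorProduct.map (LinearMap.mulRight ℂ al ∘ₗ S) LinearMap.id ∘ₗ
    (TensorProduct.comm ℂ Q Q).toLinearMap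

/-- `(x ⊗ a) ⊗ (R' ⊗ R'') ↦ x · (S(R'') · al · R') · a`. -/
def uBig (S : Q →ₗ[ℂ] Q) (al : Q) : TP2 ℂ Q ⊗[ℂ] TP2 ℂ Q →ₗ[ℂ] Q :=
  mulA ℂ Q ∘ₗ TensorProduct.map LinearMap.id (mulA ℂ Q ∘ₗ (TensorProduct.comm ℂ Q Q).toLinearMap)
    ∘ₗ (TensorProduct.assoc ℂ Q Q Q).toLinearMap ∘ₗ TensorProduct.map LinearMap.id (uMap2 S al)

/-- The Drinfeld element `u = Σ S(Φ''·b·S(Φ'''))·S(R'')·α·R'·Φ'` (with `α = 1`). -/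
def uDrin (β : ℂ) (S : Q →ₗ[ℂ] Q) : Q :=
  uBig S 1 (uMap1 S (bbEl β) (Phi β) ⊗ₜ[ℂ] Rmat β)

/-- The balancing element `g = b · S(α) · v⁻¹ · u` (with `α = 1`). -/
def balG (β : ℂ) (S : Q →ₗ[ℂ] Q) : Q :=
  bbEl β * S 1 * Ring.inverse (vRib β) * uDrin β S

/-- The cointegral `c = (β²/i)·E·F·(1 + K + K² + K³)`. -/
def cInt (β : ℂ) : Q := (β ^ 2 / Complex.I) • (gE * gF * (1 + gK + gK ^ 2 + gK ^ 3))

/-- The q-trace of a one-dimensional representation, with balancing element `K⁻¹`. -/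
def qTr1 (ρ : Q →ₐ[ℂ] ℂ) : Q →ₗ[ℂ] ℂ := ρ.toLinearMap ∘ₗ LinearMap.mulLeft ℂ gK

/-- The q-trace of a two-dimensional (matrix) representation, with balancing element `K⁻¹`. -/
def qTrM (ρ : Q →ₐ[ℂ] Matrix (Fin 2) (Fin 2) ℂ) : Q →ₗ[ℂ] ℂ :=
  Matrix.traceLinearMap (Fin 2) ℂ ℂ ∘ₗ ρ.toLinearMap ∘ₗ LinearMap.mulLeft ℂ gK

/-- The Drinfeld mapping `φ ↦ (φ ⊗ id)(M)`. -/
def drinfeldImg (β : ℂ) (φ : Q →ₗ[ℂ] ℂ) : Q :=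
  (TensorProduct.lid ℂ Q) (TensorProduct.map φ LinearMap.id (Mmat β))

/-! ### Relations and basic tools for `Q` -/

lemma q_KKi : gK * gKi = 1 := by
  have := RingQuot.mkAlgHom_rel ℂ QRel.KKi
  simpa [gK, gKi] using this

lemma q_KiK : gKi * gK = 1 := by
  have := RingQuot.mkAlgHom_rel ℂ QRel.KiK
  simpa [gK, gKi] using this

lemma q_KE : gK * gE = (-1 : ℂ) • (gE * gK) := by
  have h1 := RingQuot.mkAlgHom_rel ℂ QRel.KEKi
  rw [show -ιE = (-1 : ℂ) • ιE from (neg_one_smul ℂ ιE).symm, map_smul, map_mul, map_mul] at h1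
  change gK * gE * gKi = (-1 : ℂ) • gE at h1
  have h := congrArg (· * gK) h1
  simpa only [mul_assoc, q_KiK, mul_one, smul_mul_assoc] using h

lemma q_KF : gK * gF = (-1 : ℂ) • (gF * gK) := by
  have h1 := RingQuot.mkAlgHom_rel ℂ QRel.KFKi
  rw [show -ιF = (-1 : ℂ) • ιF from (neg_one_smul ℂ ιF).symm, map_smul, map_mul, map_mul] at h1
  change gK * gF * gKi = (-1 : ℂ) • gF at h1
  have h := congrArg (· * gK) h1
  simpa only [mul_assoc, q_KiK, mul_one, smul_mul_assoc] using h

/-- Two algebra maps out of `Q` agree if they agree on `E`, `F`, `K`. -/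
lemma q_ext {R : Type} [Ring R] [Algebra ℂ R] (f g : Q →ₐ[ℂ] R)
    (hE : f gE = g gE) (hF : f gF = g gF) (hK : f gK = g gK) : f = g := by
  have hKi : f gKi = g gKi := by
    have h1 : f gKi * f gK = 1 := by rw [← map_mul, q_KiK, map_one]
    have h2 : g gK * g gKi = 1 := by rw [← map_mul, q_KKi, map_one]
    calc f gKi = f gKi * (g gK * g gKi) := by rw [h2, mul_one]
      _ = g gKi := by rw [← hK, ← mul_assoc, h1, one_mul]
  apply RingQuot.ringQuot_ext'
  apply FreeAlgebra.hom_ext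
  funext x
  cases x
  · exact hE
  · exact hF
  · exact hK
  · exact hKi

/-- Induction principle for `Q`. -/
lemma q_ind {P : Q → Prop} (hs : ∀ r : ℂ, P (algebraMap ℂ Q r))
    (hE : P gE) (hF : P gF) (hK : P gK) (hKi : P gKi)
    (hm : ∀ a b, P a → P b → P (a * b)) (ha : ∀ a b, P a → P b → P (a + b)) (x : Q) : P x := by
  obtain ⟨y, rfl⟩ := RingQuot.mkAlgHom_surjective ℂ QRel x
  induction y using FreeAlgebra.induction with
  | grade0 r => simpa using hs r
  | grade1 g => cases g <;> assumption
  | mul a b h1 h2 => rw [map_mul]; exact hm _ _ h1 h2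
  | add a b h1 h2 => rw [map_add]; exact ha _ _ h1 h2

/-- The sign representation. -/
def chi : Q →ₐ[ℂ] ℂ :=
  RingQuot.liftAlgHom ℂ (s := QRel) ⟨FreeAlgebra.lift ℂ (fun g => match g with
    | .E => 0 | .F => 0 | .K => -1 | .Kinv => -1), by
    intro x y h
    cases h <;> simp [ιE, ιF, ιK, ιKi]
    norm_num⟩

lemma chi_E : chi gE = 0 := by simp [chi, gE, ιE]
lemma chi_F : chi gF = 0 := by simp [chi, gF, ιF]
lemma chi_K : chi gK = -1 := by simp [chi, gK, ιK]
lemma chi_Ki : chi gKi = -1 := by simp [chi, gKi, ιKi]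

/-- The two-dimensional simple projective representation. -/
def rho : Q →ₐ[ℂ] Matrix (Fin 2) (Fin 2) ℂ :=
  RingQuot.liftAlgHom ℂ (s := QRel) ⟨FreeAlgebra.lift ℂ (fun g => match g with
    | .E => !![0, 1; 0, 0] | .F => !![0, 0; 1, 0]
    | .K => !![Complex.I, 0; 0, -Complex.I] | .Kinv => !![-Complex.I, 0; 0, Complex.I]), by
    intro x y h
    cases h <;> simp only [ιE, ιF, ιK, ιKi, pow_succ, pow_zero, one_mul, map_mul, map_sub,
      map_smul, map_neg, map_one, map_zero, FreeAlgebra.lift_ι_apply] <;>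
    · apply Matrix.ext
      intro i j
      fin_cases i <;> fin_cases j <;> simp [Matrix.mul_apply, Fin.sum_univ_two] <;>
      · field_simp
        norm_num⟩

lemma rho_E : rho gE = !![0, 1; 0, 0] := by simp [rho, gE, ιE]
lemma rho_F : rho gF = !![0, 0; 1, 0] := by simp [rho, gF, ιF]
lemma rho_K : rho gK = !![Complex.I, 0; 0, -Complex.I] := by simp [rho, gK, ιK]
lemma rho_Ki : rho gKi = !![-Complex.I, 0; 0, Complex.I] := by simp [rho, gKi, ιKi]

/-- An element commuting with `E` and `F` acts as a scalar. -/
lemma rho_central (z : Q) (hE : z * gE = gE * z) (hF : z * gF = gF * z) :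
    ∃ c : ℂ, rho z = c • (1 : Matrix (Fin 2) (Fin 2) ℂ) := by
  have h1 := congrArg rho hE
  have h2 := congrArg rho hF
  rw [map_mul, map_mul, rho_E] at h1
  rw [map_mul, map_mul, rho_F] at h2
  generalize rho z = M at h1 h2
  refine ⟨M 0 0, ?_⟩
  have a := congrFun (congrFun h1 0) 1
  have b := congrFun (congrFun h1 1) 1
  have d := congrFun (congrFun h2 0) 0
  simp [Matrix.mul_apply, Fin.sum_univ_two] at a b d
  ext i j
  fin_cases i <;> fin_cases j <;> simp [a, b, d]

/-! ### Partial evaluations at the sign representation -/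

/-- `id ⊗ χ`. -/
def pR : TP2 ℂ Q →ₐ[ℂ] Q :=
  (Algebra.TensorProduct.rid ℂ ℂ Q).toAlgHom.comp
    (Algebra.TensorProduct.map (AlgHom.id ℂ Q) chi)

/-- `χ ⊗ id`. -/
def pL : TP2 ℂ Q →ₐ[ℂ] Q :=
  (Algebra.TensorProduct.lid ℂ Q).toAlgHom.comp
    (Algebra.TensorProduct.map chi (AlgHom.id ℂ Q))

lemma pR_t (a b : Q) : pR (a ⊗ₜ[ℂ] b) = chi b • a := by simp [pR]
lemma pL_t (a b : Q) : pL (a ⊗ₜ[ℂ] b) = chi a • b := by simp [pL]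

/-- `id ⊗ id ⊗ χ`. -/
def p3 : TP3 ℂ Q →ₐ[ℂ] TP2 ℂ Q := Algebra.TensorProduct.map (AlgHom.id ℂ Q) pR
/-- `id ⊗ χ ⊗ id`. -/
def p2 : TP3 ℂ Q →ₐ[ℂ] TP2 ℂ Q := Algebra.TensorProduct.map (AlgHom.id ℂ Q) pL
/-- `χ ⊗ id ⊗ id`. -/
def p1 : TP3 ℂ Q →ₐ[ℂ] TP2 ℂ Q :=
  (Algebra.TensorProduct.lid ℂ (TP2 ℂ Q)).toAlgHom.comp
    (Algebra.TensorProduct.map chi (AlgHom.id ℂ (TP2 ℂ Q)))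

lemma p3_t (a : Q) (y : TP2 ℂ Q) : p3 (a ⊗ₜ[ℂ] y) = a ⊗ₜ[ℂ] pR y := by simp [p3]
lemma p2_t (a : Q) (y : TP2 ℂ Q) : p2 (a ⊗ₜ[ℂ] y) = a ⊗ₜ[ℂ] pL y := by simp [p2]
lemma p1_t (a : Q) (y : TP2 ℂ Q) : p1 (a ⊗ₜ[ℂ] y) = chi a • y := by simp [p1]

lemma chi_pR_pL (x : TP2 ℂ Q) : chi (pR x) = chi (pL x) := by
  induction x using TensorProduct.induction_on with
  | zero => simp
  | tmul a b => simp [pR_t, pL_t, mul_comm]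
  | add a b h1 h2 => simp [h1, h2]

section twist

variable (D : Q →ₐ[ℂ] TP2 ℂ Q)

/-- `(id ⊗ χ) ∘ Δ`. -/
def thR : Q →ₐ[ℂ] Q := pR.comp D
/-- `(χ ⊗ id) ∘ Δ`. -/
def thL : Q →ₐ[ℂ] Q := pL.comp D

/-- `id ⊗ f`. -/
def mR (f : Q →ₐ[ℂ] Q) : TP2 ℂ Q →ₐ[ℂ] TP2 ℂ Q := Algebra.TensorProduct.map (AlgHom.id ℂ Q) f
/-- `f ⊗ id`. -/
def mL (f : Q →ₐ[ℂ] Q) : TP2 ℂ Q →ₐ[ℂ] TP2 ℂ Q := Algebra.TensorProduct.map f (AlgHom.id ℂ Q)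

lemma mR_t (f : Q →ₐ[ℂ] Q) (a b : Q) : mR f (a ⊗ₜ[ℂ] b) = a ⊗ₜ[ℂ] f b := by simp [mR]
lemma mL_t (f : Q →ₐ[ℂ] Q) (a b : Q) : mL f (a ⊗ₜ[ℂ] b) = f a ⊗ₜ[ℂ] b := by simp [mL]

lemma p3_emb12 (x : TP2 ℂ Q) : p3 (emb12 ℂ Q x) = x := by
  induction x using TensorProduct.induction_on with
  | zero => simp
  | tmul a b => simp [emb12, lTen, p3_t, pR_t]
  | add a b h1 h2 => simp [h1, h2]

lemma p2_emb12 (x : TP2 ℂ Q) : p2 (emb12 ℂ Q x) = pR x ⊗ₜ[ℂ] 1 := by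
  induction x using TensorProduct.induction_on with
  | zero => simp
  | tmul a b => simp [emb12, lTen, p2_t, pL_t, pR_t, TensorProduct.smul_tmul]
  | add a b h1 h2 => simp [h1, h2, TensorProduct.add_tmul]

lemma p1_emb12 (x : TP2 ℂ Q) : p1 (emb12 ℂ Q x) = pL x ⊗ₜ[ℂ] 1 := by
  induction x using TensorProduct.induction_on with
  | zero => simp
  | tmul a b => simp [emb12, lTen, p1_t, pL_t, TensorProduct.smul_tmul']
  | add a b h1 h2 => simp [h1, h2, TensorProduct.add_tmul]

lemma p3_assoc (y : TP2 ℂ Q) (b : Q) :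
    p3 (TensorProduct.assoc ℂ Q Q Q (y ⊗ₜ[ℂ] b)) = chi b • y := by
  induction y using TensorProduct.induction_on with
  | zero => simp
  | tmul a c => simp [p3_t, pR_t]
  | add a c h1 h2 => simp [h1, h2, TensorProduct.add_tmul]

lemma p2_assoc (y : TP2 ℂ Q) (b : Q) :
    p2 (TensorProduct.assoc ℂ Q Q Q (y ⊗ₜ[ℂ] b)) = pR y ⊗ₜ[ℂ] b := by
  induction y using TensorProduct.induction_on with
  | zero => simp
  | tmul a c => simp [p2_t, pL_t, pR_t, TensorProduct.smul_tmul]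
  | add a c h1 h2 => simp [h1, h2, TensorProduct.add_tmul]

lemma p1_assoc (y : TP2 ℂ Q) (b : Q) :
    p1 (TensorProduct.assoc ℂ Q Q Q (y ⊗ₜ[ℂ] b)) = pL y ⊗ₜ[ℂ] b := by
  induction y using TensorProduct.induction_on with
  | zero => simp
  | tmul a c => simp [p1_t, pL_t, TensorProduct.smul_tmul']
  | add a c h1 h2 => simp [h1, h2, TensorProduct.add_tmul]

lemma p3_copL (x : TP2 ℂ Q) : p3 (copL D x) = D (pR x) := by
  induction x using TensorProduct.induction_on with
  | zero => simp
  | tmul a b => simp [copL, p3_assoc, pR_t]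
  | add a b h1 h2 => simp [h1, h2]

lemma p2_copL (x : TP2 ℂ Q) : p2 (copL D x) = mL (thR D) x := by
  induction x using TensorProduct.induction_on with
  | zero => simp
  | tmul a b => simp [copL, p2_assoc, mL_t, thR]
  | add a b h1 h2 => simp [h1, h2]

lemma p1_copL (x : TP2 ℂ Q) : p1 (copL D x) = mL (thL D) x := by
  induction x using TensorProduct.induction_on with
  | zero => simp
  | tmul a b => simp [copL, p1_assoc, mL_t, thL]
  | add a b h1 h2 => simp [h1, h2]

lemma p3_copR (x : TP2 ℂ Q) : p3 (copR D x) = mR (thR D) x := by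
  induction x using TensorProduct.induction_on with
  | zero => simp
  | tmul a b => simp [copR, p3_t, mR_t, thR]
  | add a b h1 h2 => simp [h1, h2]

lemma p2_copR (x : TP2 ℂ Q) : p2 (copR D x) = mR (thL D) x := by
  induction x using TensorProduct.induction_on with
  | zero => simp
  | tmul a b => simp [copR, p2_t, mR_t, thL]
  | add a b h1 h2 => simp [h1, h2]

lemma p1_copR (x : TP2 ℂ Q) : p1 (copR D x) = D (pL x) := by
  induction x using TensorProduct.induction_on with
  | zero => simp
  | tmul a b => simp [copR, p1_t, pL_t]
  | add a b h1 h2 => simp [h1, h2]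

lemma pL_mR (f : Q →ₐ[ℂ] Q) (x : TP2 ℂ Q) : pL (mR f x) = f (pL x) := by
  induction x using TensorProduct.induction_on with
  | zero => simp
  | tmul a b => simp [mR_t, pL_t]
  | add a b h1 h2 => simp [h1, h2]

lemma pR_mR (f : Q →ₐ[ℂ] Q) (ce : Q →ₐ[ℂ] ℂ) (h : ∀ a, chi (f a) = ce a) (x : TP2 ℂ Q) :
    pR (mR f x) = cuR ce x := by
  induction x using TensorProduct.induction_on with
  | zero => simp
  | tmul a b => simp [mR_t, pR_t, cuR, h]
  | add a b h1 h2 => simp [h1, h2]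

lemma pL_mL (f : Q →ₐ[ℂ] Q) (ce : Q →ₐ[ℂ] ℂ) (h : ∀ a, chi (f a) = ce a) (x : TP2 ℂ Q) :
    pL (mL f x) = cuL ce x := by
  induction x using TensorProduct.induction_on with
  | zero => simp
  | tmul a b => simp [mL_t, pL_t, cuL, h]
  | add a b h1 h2 => simp [h1, h2]

lemma ce_pR (ce : Q →ₐ[ℂ] ℂ) (x : TP2 ℂ Q) : ce (pR x) = chi (cuL ce x) := by
  induction x using TensorProduct.induction_on with
  | zero => simp
  | tmul a b => simp [pR_t, cuL, mul_comm]
  | add a b h1 h2 => simp [h1, h2]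

lemma ce_pL (ce : Q →ₐ[ℂ] ℂ) (x : TP2 ℂ Q) : ce (pL x) = chi (cuR ce x) := by
  induction x using TensorProduct.induction_on with
  | zero => simp
  | tmul a b => simp [pL_t, cuR, mul_comm]
  | add a b h1 h2 => simp [h1, h2]

lemma central_left (z : Q) (hz : ∀ x, z * x = x * z) (y : TP2 ℂ Q) :
    (z ⊗ₜ[ℂ] (1 : Q)) * y = y * (z ⊗ₜ[ℂ] (1 : Q)) := by
  induction y using TensorProduct.induction_on with
  | zero => simp
  | tmul a b => simp [hz]
  | add a b h1 h2 => simp [h1, h2, mul_add, add_mul]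

lemma central_right (z : Q) (hz : ∀ x, z * x = x * z) (y : TP2 ℂ Q) :
    ((1 : Q) ⊗ₜ[ℂ] z) * y = y * ((1 : Q) ⊗ₜ[ℂ] z) := by
  induction y using TensorProduct.induction_on with
  | zero => simp
  | tmul a b => simp [hz]
  | add a b h1 h2 => simp [h1, h2, mul_add, add_mul]

end twist

/-! ### Partial evaluations of the coassociator -/

lemma chi_e0 : chi e0 = 1 := by simp [e0, chi_K]; norm_num
lemma chi_e1 : chi e1 = 0 := by simp [e1, chi_K]
lemma e0_add_e1 : e0 + e1 = 1 := by
  simp only [e0, e1, ← smul_add]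
  rw [show (1 + gK ^ 2 + (1 - gK ^ 2) : Q) = (2 : ℂ) • 1 by rw [two_smul]; abel, smul_smul]
  rw [inv_mul_cancel₀ two_ne_zero, one_smul]

lemma e_sum_tensor : e0 ⊗ₜ[ℂ] e0 + e1 ⊗ₜ[ℂ] e0 + e0 ⊗ₜ[ℂ] e1 + e1 ⊗ₜ[ℂ] e1 = (1 : TP2 ℂ Q) := by
  rw [← TensorProduct.add_tmul, add_assoc, ← TensorProduct.add_tmul, ← TensorProduct.tmul_add,
    e0_add_e1, Algebra.TensorProduct.one_def]

lemma p3_Phi (β : ℂ) : p3 (Phi β) = 1 := by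
  have h : p3 Phi010 = 1 := by
    simp [Phi010, t3, p3_t, pR_t, eEK, eEFK, chi_E, chi_F, Algebra.TensorProduct.one_def]
  rw [← e_sum_tensor]
  simp only [Phi, map_add, map_mul, h]
  simp [t3, p3_t, pR_t, chi_e0, chi_e1]

lemma p1_Phi (β : ℂ) : p1 (Phi β) = 1 := by
  have h : p1 Phi010 = 1 := by
    simp [Phi010, t3, p1_t, eFK, eEFK, chi_E, chi_F, Algebra.TensorProduct.one_def]
  rw [← e_sum_tensor]
  simp only [Phi, map_add, map_mul, h]
  simp [t3, p1_t, chi_e0, chi_e1]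

lemma p2_Phi (β : ℂ) : p2 (Phi β) =
    e0 ⊗ₜ[ℂ] e0 + e1 ⊗ₜ[ℂ] e0 + e0 ⊗ₜ[ℂ] e1 + (-1 : ℂ) • (e1 ⊗ₜ[ℂ] e1) := by
  have h : p2 Phi101 = (-1 : ℂ) • 1 := by
    simp [Phi101, t3, p2_t, pL_t, eFK, eEFK, eEF, eEK, chi_E, chi_F, chi_K,
      Algebra.TensorProduct.one_def]
    exact neg_one_smul ℂ _
  simp only [Phi, map_add, map_mul, h]
  simp [t3, p2_t, pL_t, chi_e0, chi_e1]
  exact (neg_one_smul ℂ _).symm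

lemma p2_Phi_comm (β : ℂ) : (gK ⊗ₜ[ℂ] (1 : Q)) * p2 (Phi β) = p2 (Phi β) * (gK ⊗ₜ[ℂ] (1 : Q)) := by
  have h2 : gK * gK ^ 2 = gK ^ 2 * gK := by rw [← pow_succ, ← pow_succ']
  have h0 : gK * e0 = e0 * gK := by
    simp only [e0, mul_smul_comm, smul_mul_assoc, mul_add, add_mul, h2, mul_one, one_mul]
  have h1 : gK * e1 = e1 * gK := by
    have h := e0_add_e1
    have h3 : gK * (e0 + e1) = (e0 + e1) * gK := by rw [h, mul_one, one_mul]
    rw [mul_add, add_mul, h0] at h3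
    exact add_left_cancel h3
  rw [p2_Phi]
  simp only [mul_add, add_mul, mul_smul_comm, smul_mul_assoc,
    Algebra.TensorProduct.tmul_mul_tmul, h0, h1, one_mul, mul_one]

lemma rearrange {R : Type} [Monoid R] (P a1 a2 b1 b2 k1 k2 F dA dB M N M' N' : R)
    (ha1 : ∀ y, a1 * y = y * a1) (ha2 : ∀ y, a2 * y = y * a2)
    (hb1 : ∀ y, b1 * y = y * b1) (hb2 : ∀ y, b2 * y = y * b2)
    (hP : k1 * P = P * k1)
    (h3 : a2 * M = F * dA) (h1 : F * dB = b1 * N) (h2 : P * b2 * M' = a1 * N')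
    (c1 : M' * k2 = k2 * M) (c2 : k1 * N' = N * k1) :
    P * (b1 * b2) * (k1 * k2) * (F * dA) = (a1 * a2) * (F * dB) * (k1 * k2) := by
  have w1 : P * (b1 * b2) = b1 * (P * b2) := by rw [← mul_assoc, ← hb1, mul_assoc]
  have w2 : P * b2 * k1 = k1 * (P * b2) := by
    rw [mul_assoc, hb2, ← mul_assoc, ← hP, mul_assoc]
  calc P * (b1 * b2) * (k1 * k2) * (F * dA)
      = a2 * (P * (b1 * b2) * (k1 * k2) * M) := by rw [← h3, ← mul_assoc, ← ha2, mul_assoc]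
    _ = a2 * (b1 * ((P * b2 * k1) * (k2 * M))) := by rw [w1]; simp only [mul_assoc]
    _ = a2 * (b1 * (k1 * ((P * b2 * M') * k2))) := by
        rw [w2, ← c1]; simp only [mul_assoc]
    _ = a2 * (b1 * ((k1 * a1) * N' * k2)) := by rw [h2]; simp only [mul_assoc]
    _ = a2 * ((b1 * a1) * ((k1 * N') * k2)) := by rw [← ha1]; simp only [mul_assoc]
    _ = (a2 * a1) * ((b1 * N) * (k1 * k2)) := by rw [c2, ← ha1]; simp only [mul_assoc]
    _ = _ := by rw [← h1, ← ha1]; simp only [mul_assoc]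

/-! ### The tensor square of the two-dimensional representation, realised on matrices -/

/-- Left action `a ↦ (M ↦ ρ(a) M)`. -/
def actL : Q →ₐ[ℂ] Module.End ℂ (Matrix (Fin 2) (Fin 2) ℂ) :=
  (Algebra.lmul ℂ (Matrix (Fin 2) (Fin 2) ℂ)).comp rho

/-- Action on the second index, `b ↦ (M ↦ M ρ(b)ᵀ)`. -/
def actR : Q →ₐ[ℂ] Module.End ℂ (Matrix (Fin 2) (Fin 2) ℂ) :=
  AlgHom.ofLinearMap
    ((LinearMap.mul ℂ (Matrix (Fin 2) (Fin 2) ℂ)).flip ∘ₗ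
      (Matrix.transposeLinearEquiv (Fin 2) (Fin 2) ℂ ℂ).toLinearMap ∘ₗ rho.toLinearMap)
    (by ext; simp)
    (by
      intro x y
      apply LinearMap.ext
      intro M
      simp [Matrix.transpose_mul, mul_assoc])

lemma actL_apply (a : Q) (M : Matrix (Fin 2) (Fin 2) ℂ) : actL a M = rho a * M := rfl
lemma actR_apply (a : Q) (M : Matrix (Fin 2) (Fin 2) ℂ) : actR a M = M * (rho a).transpose := rfl

lemma act_comm (x y : Q) : Commute (actL x) (actR y) := by
  apply LinearMap.ext
  intro M
  simp [actL_apply, actR_apply, mul_assoc]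

/-- The representation `ρ ⊗ ρ` of `Q ⊗ Q`. -/
def act : TP2 ℂ Q →ₐ[ℂ] Module.End ℂ (Matrix (Fin 2) (Fin 2) ℂ) :=
  Algebra.TensorProduct.lift actL actR act_comm

lemma act_t (a b : Q) (M : Matrix (Fin 2) (Fin 2) ℂ) :
    act (a ⊗ₜ[ℂ] b) M = rho a * M * (rho b).transpose := by
  rw [act, Algebra.TensorProduct.lift_tmul, Module.End.mul_apply, actL_apply, actR_apply, mul_assoc]

/-- The invariant vector. -/
def vV : Matrix (Fin 2) (Fin 2) ℂ := !![0, Complex.I; -1, 0]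

lemma vV_ne : vV ≠ 0 := by
  intro h
  have := congrFun (congrFun h 1) 0
  simp [vV] at this

lemma rho_e0 : rho e0 = 0 := by
  simp only [e0, map_smul, map_add, map_one, map_pow, rho_K]
  ext i j
  fin_cases i <;> fin_cases j <;> simp [pow_two]

lemma rho_e1 : rho e1 = 1 := by
  have h := congrArg rho e0_add_e1
  rwa [map_add, rho_e0, zero_add, map_one] at h

lemma act_p2_Phi (β : ℂ) (M : Matrix (Fin 2) (Fin 2) ℂ) : act (p2 (Phi β)) M = -M := by
  rw [p2_Phi]
  simp [act_t, rho_e0, rho_e1]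

lemma act_D (Δ : Q →ₐ[ℂ] TP2 ℂ Q)
    (hΔE : Δ gE = (1:Q) ⊗ₜ[ℂ] gE + gE ⊗ₜ[ℂ] gK)
    (hΔF : Δ gF = gKi ⊗ₜ[ℂ] gF + gF ⊗ₜ[ℂ] (1:Q))
    (hΔK : Δ gK = gK ⊗ₜ[ℂ] gK)
    (hΔKi : Δ gKi = gKi ⊗ₜ[ℂ] gKi)
    (ce : Q →ₐ[ℂ] ℂ) (hceE : ce gE = 0) (hceF : ce gF = 0) (hceK : ce gK = 1)
    (hceKi : ce gKi = 1) (a : Q) : act (Δ a) vV = ce a • vV := by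
  induction a using q_ind with
  | hs r => simp [Algebra.algebraMap_eq_smul_one]
  | hE =>
    rw [hΔE, hceE, map_add, LinearMap.add_apply, act_t, act_t, map_one, rho_E, rho_K]
    ext i j
    fin_cases i <;> fin_cases j <;> simp [vV, Matrix.mul_apply, Matrix.vecMul, dotProduct, Fin.sum_univ_two]
  | hF =>
    rw [hΔF, hceF, map_add, LinearMap.add_apply, act_t, act_t, map_one, rho_F, rho_Ki]
    ext i j
    fin_cases i <;> fin_cases j <;> simp [vV, Matrix.mul_apply, Matrix.vecMul, dotProduct, Fin.sum_univ_two]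
  | hK =>
    rw [hΔK, hceK, act_t, rho_K]
    ext i j
    fin_cases i <;> fin_cases j <;> simp [vV, Matrix.mul_apply, Matrix.vecMul, dotProduct, Fin.sum_univ_two]
  | hKi =>
    rw [hΔKi, hceKi, act_t, rho_Ki]
    ext i j
    fin_cases i <;> fin_cases j <;> simp [vV, Matrix.mul_apply, Matrix.vecMul, dotProduct, Fin.sum_univ_two]
  | hm a b h1 h2 => simp [h1, h2, smul_smul, mul_comm]
  | ha a b h1 h2 => simp [h1, h2, add_smul]

/-- the coassociator `Φ` is not the coboundary of any Drinfeld twist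
of the Hopf algebra `Q`; i.e. `(Q, Φ)` is not a Drinfeld twist of `Q`. -/
theorem statement11 (β : ℂ) (hβ : β ^ 4 = -1)
    (Δ : Q →ₐ[ℂ] TP2 ℂ Q)
    (hΔE : Δ gE = (1:Q) ⊗ₜ[ℂ] gE + gE ⊗ₜ[ℂ] gK)
    (hΔF : Δ gF = gKi ⊗ₜ[ℂ] gF + gF ⊗ₜ[ℂ] (1:Q))
    (hΔK : Δ gK = gK ⊗ₜ[ℂ] gK)
    (ce : Q →ₐ[ℂ] ℂ) (hceE : ce gE = 0) (hceF : ce gF = 0) (hceK : ce gK = 1) :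
    ¬ ∃ Ftw : TP2 ℂ Q, IsUnit Ftw ∧
      cuL ce Ftw = 1 ∧ cuR ce Ftw = 1 ∧
      (∀ a : Q, Ftw * Δ a * Ring.inverse Ftw = Δ a) ∧
      Phi β = emb12 ℂ Q Ftw * copL Δ Ftw * Ring.inverse (copR Δ Ftw) *
        Ring.inverse ((1:Q) ⊗ₜ[ℂ] Ftw) := by
  rintro ⟨F, hFu, hcL, hcR, hcomm, hPhi⟩
  -- the inverse generator
  have hΔKi : Δ gKi = gKi ⊗ₜ[ℂ] gKi := by
    have h1 : Δ gKi * (gK ⊗ₜ[ℂ] gK) = 1 := by rw [← hΔK, ← map_mul, q_KiK, map_one]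
    have h2 : (gK ⊗ₜ[ℂ] gK) * (gKi ⊗ₜ[ℂ] gKi) = (1 : TP2 ℂ Q) := by
      simp [q_KKi, Algebra.TensorProduct.one_def]
    calc Δ gKi = Δ gKi * ((gK ⊗ₜ[ℂ] gK) * (gKi ⊗ₜ[ℂ] gKi)) := by rw [h2, mul_one]
      _ = _ := by rw [← mul_assoc, h1, one_mul]
  have hceKi : ce gKi = 1 := by
    have h := congrArg ce q_KiK
    rwa [map_mul, hceK, mul_one, map_one] at h
  -- `F` commutes with the coproduct
  have hF : ∀ a, F * Δ a = Δ a * F := by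
    intro a
    have h := congrArg (· * F) (hcomm a)
    simpa [mul_assoc, Ring.inverse_mul_cancel F hFu] using h
  -- cleared denominators
  have hcob : Phi β * ((1 : Q) ⊗ₜ[ℂ] F) * copR Δ F = emb12 ℂ Q F * copL Δ F := by
    have hu1 : IsUnit (copR Δ F) := by
      have := hFu.map (Algebra.TensorProduct.map (AlgHom.id ℂ Q) Δ)
      exact this
    have hu2 : IsUnit ((1 : Q) ⊗ₜ[ℂ] F) := by
      have := hFu.map (Algebra.TensorProduct.includeRight : TP2 ℂ Q →ₐ[ℂ] Q ⊗[ℂ] TP2 ℂ Q)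
      exact this
    rw [hPhi, mul_assoc _ _ ((1 : Q) ⊗ₜ[ℂ] F), Ring.inverse_mul_cancel _ hu2, mul_one,
      mul_assoc _ _ (copR Δ F), Ring.inverse_mul_cancel _ hu1, mul_one]
  -- the twisting automorphisms
  have thRE : thR Δ gE = (-1 : ℂ) • gE := by simp [thR, hΔE, pR_t, chi_E, chi_K]
  have thRF : thR Δ gF = gF := by simp [thR, hΔF, pR_t, chi_F]
  have thRK : thR Δ gK = (-1 : ℂ) • gK := by simp [thR, hΔK, pR_t, chi_K]
  have thRKi : thR Δ gKi = (-1 : ℂ) • gKi := by simp [thR, hΔKi, pR_t, chi_Ki]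
  have thLE : thL Δ gE = gE := by simp [thL, hΔE, pL_t, chi_E]
  have thLF : thL Δ gF = (-1 : ℂ) • gF := by simp [thL, hΔF, pL_t, chi_F, chi_Ki]
  have thLK : thL Δ gK = (-1 : ℂ) • gK := by simp [thL, hΔK, pL_t, chi_K]
  have thLKi : thL Δ gKi = (-1 : ℂ) • gKi := by simp [thL, hΔKi, pL_t, chi_Ki]
  have thRR : ∀ x, thR Δ (thR Δ x) = x := by
    intro x
    have : (thR Δ).comp (thR Δ) = AlgHom.id ℂ Q := by
      apply q_ext <;> simp [thRE, thRF, thRK, smul_smul]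
    exact DFunLike.congr_fun this x
  have thLL : ∀ x, thL Δ (thL Δ x) = x := by
    intro x
    have : (thL Δ).comp (thL Δ) = AlgHom.id ℂ Q := by
      apply q_ext <;> simp [thLE, thLF, thLK, smul_smul]
    exact DFunLike.congr_fun this x
  have chiR : ∀ a, chi (thR Δ a) = ce a := by
    intro x
    have : chi.comp (thR Δ) = ce := by
      apply q_ext <;> simp [thRE, thRF, thRK, chi_E, chi_F, chi_K, hceE, hceF, hceK]
    exact DFunLike.congr_fun this x
  have chiL : ∀ a, chi (thL Δ a) = ce a := by
    intro x
    have : chi.comp (thL Δ) = ce := by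
      apply q_ext <;> simp [thLE, thLF, thLK, chi_E, chi_F, chi_K, hceE, hceF, hceK]
    exact DFunLike.congr_fun this x
  have hLR : ∀ x, thL Δ x * gK = gK * thR Δ x := by
    intro x
    induction x using q_ind with
    | hs r => rw [AlgHom.commutes, AlgHom.commutes, Algebra.commutes]
    | hE => rw [thLE, thRE, mul_smul_comm, q_KE, smul_smul]; norm_num
    | hF => rw [thLF, thRF, q_KF, smul_mul_assoc]
    | hK => rw [thLK, thRK, smul_mul_assoc, mul_smul_comm]
    | hKi => rw [thLKi, thRKi, smul_mul_assoc, mul_smul_comm, q_KiK, q_KKi]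
    | hm a b h1 h2 => rw [map_mul, map_mul, mul_assoc, h2, ← mul_assoc, h1, mul_assoc]
    | ha a b h1 h2 => rw [map_add, map_add, add_mul, mul_add, h1, h2]
  -- the central elements `A`, `B`
  set A := pR F with hA
  set B := pL F with hB
  have hAc : ∀ x, A * x = x * A := by
    intro x
    have h := congrArg pR (hF (thR Δ x))
    rw [map_mul, map_mul] at h
    change A * thR Δ (thR Δ x) = thR Δ (thR Δ x) * A at h
    rwa [thRR] at h
  have hBc : ∀ x, B * x = x * B := by
    intro x
    have h := congrArg pL (hF (thL Δ x))
    rw [map_mul, map_mul] at h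
    change B * thL Δ (thL Δ x) = thL Δ (thL Δ x) * B at h
    rwa [thLL] at h
  have thA : ∀ z, (∀ x, z * x = x * z) → thL Δ z = thR Δ z := by
    intro z hz
    have h1 : gK * thR Δ z = thR Δ z * gK := by
      have h := congrArg (thR Δ) (hz gK)
      rw [map_mul, map_mul, thRK, mul_smul_comm, smul_mul_assoc] at h
      have h' := congrArg (fun y => (-1 : ℂ) • y) h
      simp only [smul_smul, neg_mul_neg, one_mul, one_smul] at h'
      exact h'.symm
    have h2 := congrArg (· * gKi) ((hLR z).trans h1)
    simpa [mul_assoc, q_KKi] using h2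
  -- the three partially evaluated equations
  have e3 : ((1 : Q) ⊗ₜ[ℂ] A) * mR (thR Δ) F = F * Δ A := by
    have h := congrArg p3 hcob
    rwa [map_mul, map_mul, map_mul, p3_Phi, one_mul, p3_t, p3_copR, p3_emb12, p3_copL] at h
  have e1' : F * Δ B = (B ⊗ₜ[ℂ] (1 : Q)) * mL (thL Δ) F := by
    have h := congrArg p1 hcob
    rwa [map_mul, map_mul, map_mul, p1_Phi, one_mul, p1_t, map_one, one_smul, p1_copR, p1_emb12,
      p1_copL] at h
  have e2 : p2 (Phi β) * ((1 : Q) ⊗ₜ[ℂ] B) * mR (thL Δ) F =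
      (A ⊗ₜ[ℂ] (1 : Q)) * mL (thR Δ) F := by
    have h := congrArg p2 hcob
    rwa [map_mul, map_mul, map_mul, p2_t, p2_copR, p2_emb12, p2_copL] at h
  -- scalar consequences
  have s1 : algebraMap ℂ Q (chi A) = A * thR Δ A := by
    have h := congrArg pR e3
    rw [map_mul, map_mul, pR_t, pR_mR _ ce chiR, hcR, mul_one, ← Algebra.algebraMap_eq_smul_one] at h
    exact h
  have s2 : B * thR Δ B = algebraMap ℂ Q (chi A) := by
    have h := congrArg pL e1'
    rw [map_mul, map_mul, pL_t, pL_mL _ ce chiL, hcL, mul_one, ← Algebra.algebraMap_eq_smul_one,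
      ← chi_pR_pL] at h
    rw [← thA B hBc]
    exact h
  have s3 : A * thR Δ B = B * thR Δ A := by
    have h := congrArg pL e3
    rw [map_mul, map_mul, pL_t, map_one, one_smul, pL_mR] at h
    rw [← thA A hAc]
    exact h
  have hAu : IsUnit A := hFu.map pR
  have hthAu : IsUnit (thR Δ A) := hAu.map (thR Δ)
  have hsq : A * A = B * B := by
    have h : (A * A) * thR Δ A = (B * B) * thR Δ A := by
      rw [mul_assoc, mul_assoc, ← s3, ← s1, ← s2, ← mul_assoc, ← mul_assoc, hAc B]
    exact hthAu.mul_right_cancel h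
  -- the final equation
  have c1 : mR (thL Δ) F * ((1 : Q) ⊗ₜ[ℂ] gK) = ((1 : Q) ⊗ₜ[ℂ] gK) * mR (thR Δ) F := by
    generalize F = x
    induction x using TensorProduct.induction_on with
    | zero => simp
    | tmul a b => simp [mR_t, hLR]
    | add a b h1 h2 => simp [h1, h2, mul_add, add_mul]
  have c2 : (gK ⊗ₜ[ℂ] (1 : Q)) * mL (thR Δ) F = mL (thL Δ) F * (gK ⊗ₜ[ℂ] (1 : Q)) := by
    generalize F = x
    induction x using TensorProduct.induction_on with
    | zero => simp
    | tmul a b => simp [mL_t, hLR]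
    | add a b h1 h2 => simp [h1, h2, mul_add, add_mul]
  have key : act (p2 (Phi β)) * act (B ⊗ₜ[ℂ] B) * act (Δ (gK * A)) =
      act (A ⊗ₜ[ℂ] A) * act (Δ (gK * B)) := by
    have h := rearrange (p2 (Phi β)) _ _ (B ⊗ₜ[ℂ] (1 : Q)) ((1 : Q) ⊗ₜ[ℂ] B) _ _ F (Δ A) (Δ B) _ _ _ _
      (central_left A hAc) (central_right A hAc) (central_left B hBc) (central_right B hBc)
      (p2_Phi_comm β) e3 e1' e2 c1 c2
    simp only [Algebra.TensorProduct.tmul_mul_tmul, one_mul, mul_one] at h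
    rw [← hΔK, hF A] at h
    have hBK : F * Δ B * Δ gK = Δ (gK * B) * F := by
      rw [mul_assoc, ← map_mul, hBc, hF]
    rw [mul_assoc (A ⊗ₜ[ℂ] A), hBK, ← mul_assoc, ← mul_assoc, mul_assoc _ (Δ gK), ← map_mul] at h
    have h' := hFu.mul_right_cancel h
    have h'' := congrArg act h'
    simpa only [map_mul] using h''
  obtain ⟨a, ha⟩ := rho_central A (hAc _) (hAc _)
  obtain ⟨b, hb⟩ := rho_central B (hBc _) (hBc _)
  have hab : a * a = b * b := by
    have h := congrArg rho hsq
    rw [map_mul, map_mul, ha, hb] at h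
    have := congrFun (congrFun h 0) 0
    simpa using this
  have hceA : ce A = 1 := by rw [hA, ce_pR, hcL, map_one]
  have hceB : ce B = 1 := by rw [hB, ce_pL, hcR, map_one]
  have hfin := LinearMap.congr_fun key vV
  simp only [Module.End.mul_apply] at hfin
  rw [act_D Δ hΔE hΔF hΔK hΔKi ce hceE hceF hceK hceKi,
    act_D Δ hΔE hΔF hΔK hΔKi ce hceE hceF hceK hceKi, map_mul, map_mul, hceA, hceB, hceK,
    act_t, act_t, act_p2_Phi, ha, hb] at hfin
  have h10 := congrFun (congrFun hfin 1) 0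
  simp [vV] at h10
  have ha0 : a * a = 0 := by
    linear_combination (1/2 : ℂ) * hab + (1/2 : ℂ) * h10
  have ha1 : a = 0 := by simpa using ha0
  rw [ha1, zero_smul] at ha
  have hu := hAu.map rho
  rw [ha] at hu
  exact not_isUnit_zero hu
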